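/- arXiv:math/0506281 — 2 statements merged into one kernel-verified Lean document; each statement's English description precedes it below -/
import Mathlib

section
/- Let G be a finite simple graph on vertex set V = {v_1,...,v_n} and let F be a facet of the edge cone R+A of G. Then either (a) F = R+A ∩ {x ∈ R^n : x_i = 0} for some 1 ≤ i ≤ n, or (b) F = R+A ∩ H_A for some independent set A of vertices of G. -/
open Finset

/-- The edge vector `e_i + e_j` associated to an edge `{i, j}`. -/
def edgeVector {V : Type*} [DecidableEq V] (i j : V) : V → ℝ :=
  fun k => (if k = i then 1 else 0) + (if k = j then 1 else 0)

/-- The edge cone of a graph `G`: all nonnegative real linear combinations of the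
edge vectors of `G`. -/
def edgeCone {V : Type*} [Fintype V] [DecidableEq V] (G : SimpleGraph V) :
    Set (V → ℝ) :=
  { x | ∃ c : V → V → ℝ, (∀ i j, 0 ≤ c i j) ∧ (∀ i j, ¬ G.Adj i j → c i j = 0) ∧
        x = ∑ i, ∑ j, c i j • edgeVector i j }

/-- The neighbor set `N(A)`: vertices adjacent to at least one vertex of `A`. -/
def nbr {V : Type*} [Fintype V] [DecidableEq V] (G : SimpleGraph V)
    [DecidableRel G.Adj] (A : Finset V) : Finset V :=
  Finset.univ.filter fun v => ∃ a ∈ A, G.Adj v a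

/-- `A` is an independent set of vertices of `G`. -/
def IsIndep {V : Type*} (G : SimpleGraph V) (A : Finset V) : Prop :=
  ∀ a ∈ A, ∀ b ∈ A, ¬ G.Adj a b

/-- `F` is a face of the cone `Q`: `F = Q ∩ {x | ⟪x, a⟫ = 0}` for some `a` with
`Q ⊆ {x | ⟪x, a⟫ ≤ 0}`. -/
def IsFace {V : Type*} [Fintype V] (Q F : Set (V → ℝ)) : Prop :=
  ∃ a : V → ℝ, (∀ x ∈ Q, ∑ i, x i * a i ≤ 0) ∧ F = Q ∩ {x | ∑ i, x i * a i = 0}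

/-- `F` is a facet of the cone `Q`: a face whose linear span has dimension one less
than the dimension of the linear span of `Q`. -/
def IsFacet {V : Type*} [Fintype V] (Q F : Set (V → ℝ)) : Prop :=
  IsFace Q F ∧
    Module.finrank ℝ (Submodule.span ℝ F) = Module.finrank ℝ (Submodule.span ℝ Q) - 1

/-
Let `a` support the facet `F`, so that `a i + a j ≤ 0` on every edge, and call an edge tight if
equality holds; `F` is spanned by the tight edge vectors. If a vector `b` is orthogonal to every
tight edge vector but not to every edge vector, then `R+A ∩ b^⊥` contains `F` and spans a proper
subspace of `span R+A`, so it equals `F` by a dimension count. Such a `b` is found at an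
endpoint `i` with `a i < 0` of an edge that is not tight: if no tight edge meets `i`, take the
coordinate vector of `i`; otherwise `A = {v | -a i ≤ a v}` is independent, every tight edge
meeting `N(A)` joins it to `A`, and the normal vector of `H_A` works.
-/

section Span

variable {K E : Type*} [DivisionRing K] [AddCommGroup E] [Module K E] [FiniteDimensional K E]

theorem inter_eq_inter_of_finrank_span_le {Q : Set E} {P P' : Submodule K E}
    (hdim : Module.finrank K (Submodule.span K Q) ≤
      Module.finrank K (Submodule.span K (Q ∩ P)) + 1)
    (hsub : Q ∩ P ⊆ P') (hQ : ¬ Q ⊆ P') : Q ∩ P = Q ∩ P' := by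
  have hQP : Q ∩ P ⊆ Q ∩ P' := Set.subset_inter Set.inter_subset_left hsub
  have hlt : Submodule.span K (Q ∩ P') < Submodule.span K Q := by
    refine lt_of_le_not_ge (Submodule.span_mono Set.inter_subset_left) fun hle => hQ ?_
    exact Submodule.span_le.1 (hle.trans (Submodule.span_le.2 Set.inter_subset_right))
  have hspan : Submodule.span K (Q ∩ P) = Submodule.span K (Q ∩ P') := by
    have := Submodule.finrank_lt_finrank_of_lt hlt
    exact Submodule.eq_of_le_of_finrank_le (Submodule.span_mono hQP) (by omega)
  have hP : Submodule.span K (Q ∩ P') ≤ P :=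
    hspan ▸ Submodule.span_le.2 Set.inter_subset_right
  exact hQP.antisymm (Set.subset_inter Set.inter_subset_left (Submodule.span_le.1 hP))

end Span

section EdgeCone

variable {V : Type*} {G : SimpleGraph V} {a b : V → ℝ}

lemma exists_adj_add_neg_of_not_tight (ha : ∀ i j, G.Adj i j → a i + a j ≤ 0)
    (h : ¬ ∀ i j, G.Adj i j → a i + a j = 0) :
    ∃ i j, G.Adj i j ∧ a i + a j < 0 ∧ a i < 0 := by
  push Not at h
  obtain ⟨i, j, hij, hne⟩ := h
  have hlt := (ha i j hij).lt_of_ne hne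
  rcases lt_or_ge (a i) 0 with hi | hi
  · exact ⟨i, j, hij, hlt, hi⟩
  · exact ⟨j, i, hij.symm, by linarith, by linarith⟩

variable [Fintype V] [DecidableEq V]

lemma edgeVector_dotProduct (i j : V) (b : V → ℝ) : edgeVector i j ⬝ᵥ b = b i + b j := by
  simp [dotProduct, edgeVector, add_mul, sum_add_distrib]

lemma sum_smul_edgeVector_dotProduct (c : V → V → ℝ) (b : V → ℝ) :
    (∑ i, ∑ j, c i j • edgeVector i j) ⬝ᵥ b = ∑ i, ∑ j, c i j * (b i + b j) := by
  simp only [sum_dotProduct, smul_dotProduct, edgeVector_dotProduct, smul_eq_mul]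

lemma edgeVector_mem_edgeCone {i j : V} (h : G.Adj i j) : edgeVector i j ∈ edgeCone G := by
  refine ⟨fun k l => if k = i ∧ l = j then 1 else 0, fun k l => ?_, fun k l hkl => ?_, ?_⟩
  · positivity
  · exact if_neg (by rintro ⟨rfl, rfl⟩; exact hkl h)
  · simp [ite_and, ite_smul]

lemma dotProduct_eq_zero_of_tight (ha : ∀ i j, G.Adj i j → a i + a j ≤ 0)
    (hab : ∀ i j, G.Adj i j → a i + a j = 0 → b i + b j = 0)
    {x : V → ℝ} (hx : x ∈ edgeCone G) (hxa : x ⬝ᵥ a = 0) : x ⬝ᵥ b = 0 := by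
  obtain ⟨c, hc, hcG, rfl⟩ := hx
  rw [sum_smul_edgeVector_dotProduct, ← Fintype.sum_prod_type'] at hxa ⊢
  have hle : ∀ p ∈ (univ : Finset (V × V)), c p.1 p.2 * (a p.1 + a p.2) ≤ 0 := fun (i, j) _ => by
    by_cases hij : G.Adj i j
    · exact mul_nonpos_of_nonneg_of_nonpos (hc i j) (ha i j hij)
    · simp [hcG i j hij]
  refine sum_eq_zero fun (i, j) hp => ?_
  by_cases hij : G.Adj i j
  · rcases mul_eq_zero.1 ((sum_eq_zero_iff_of_nonpos hle).1 hxa (i, j) hp) with h | h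
    · exact mul_eq_zero_of_left h _
    · exact mul_eq_zero_of_right _ (hab i j hij h)
  · exact mul_eq_zero_of_left (hcG i j hij) _

lemma dotProduct_eq_zero_of_forall_adj (ha : ∀ i j, G.Adj i j → a i + a j = 0)
    {x : V → ℝ} (hx : x ∈ edgeCone G) : x ⬝ᵥ a = 0 :=
  dotProduct_eq_zero_of_tight (a := 0) (by simp) (fun i j h _ => ha i j h) hx (by simp)

theorem edgeCone_inter_eq_of_tight (ha : ∀ i j, G.Adj i j → a i + a j ≤ 0)
    (hdim : Module.finrank ℝ (Submodule.span ℝ (edgeCone G)) ≤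
      Module.finrank ℝ (Submodule.span ℝ (edgeCone G ∩ {x | x ⬝ᵥ a = 0})) + 1)
    (hab : ∀ i j, G.Adj i j → a i + a j = 0 → b i + b j = 0)
    {p q : V} (hpq : G.Adj p q) (hb : b p + b q ≠ 0) :
    edgeCone G ∩ {x | x ⬝ᵥ a = 0} = edgeCone G ∩ {x | x ⬝ᵥ b = 0} := by
  let orth (u : V → ℝ) : Submodule ℝ (V → ℝ) := LinearMap.ker ((dotProductBilin ℝ ℝ).flip u)
  refine inter_eq_inter_of_finrank_span_le (P := orth a) (P' := orth b) hdim
    (fun x hx => dotProduct_eq_zero_of_tight ha hab hx.1 hx.2) fun hQ => hb ?_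
  rw [← edgeVector_dotProduct]
  exact hQ (edgeVector_mem_edgeCone hpq)

theorem edgeCone_inter_eq_coordinate (ha : ∀ i j, G.Adj i j → a i + a j ≤ 0)
    (hdim : Module.finrank ℝ (Submodule.span ℝ (edgeCone G)) ≤
      Module.finrank ℝ (Submodule.span ℝ (edgeCone G ∩ {x | x ⬝ᵥ a = 0})) + 1)
    {i j : V} (hij : G.Adj i j) (hi : ∀ k, G.Adj i k → a i + a k ≠ 0) :
    edgeCone G ∩ {x | x ⬝ᵥ a = 0} = edgeCone G ∩ {x | x i = 0} := by
  have htight : ∀ v w, G.Adj v w → a v + a w = 0 →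
      (Pi.single i 1 : V → ℝ) v + (Pi.single i 1 : V → ℝ) w = 0 := by
    intro v w hvw h
    have hv : v ≠ i := by rintro rfl; exact hi w hvw h
    have hw : w ≠ i := by rintro rfl; exact hi v hvw.symm (by rwa [add_comm])
    simp [hv, hw]
  have hne : (Pi.single i 1 : V → ℝ) i + (Pi.single i 1 : V → ℝ) j ≠ 0 := by simp [hij.ne']
  simpa only [dotProduct_single_one] using edgeCone_inter_eq_of_tight ha hdim htight hij hne

end EdgeCone

section Independent

variable {V : Type*} [Fintype V] {G : SimpleGraph V} {A : Finset V} {a : V → ℝ} {t : ℝ}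

lemma isIndep_superlevel (ha : ∀ i j, G.Adj i j → a i + a j ≤ 0) (ht : 0 < t) :
    IsIndep G {v | t ≤ a v} := by
  intro v hv w hw hvw
  rw [mem_filter_univ] at hv hw
  linarith [ha v w hvw]

variable [DecidableEq V] [DecidableRel G.Adj]

lemma mem_nbr {v : V} : v ∈ nbr G A ↔ ∃ w ∈ A, G.Adj v w := mem_filter_univ v

/-- The normal vector `∑_{v ∈ A} e_v - ∑_{v ∈ N(A)} e_v` of the hyperplane `H_A`. -/
def nbrNormal (G : SimpleGraph V) [DecidableRel G.Adj] (A : Finset V) : V → ℝ :=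
  fun v => (if v ∈ A then 1 else 0) - (if v ∈ nbr G A then 1 else 0)

lemma dotProduct_nbrNormal_eq_zero_iff {x : V → ℝ} :
    x ⬝ᵥ nbrNormal G A = 0 ↔ ∑ i ∈ A, x i = ∑ i ∈ nbr G A, x i := by
  simp [dotProduct, nbrNormal, mul_sub, sum_sub_distrib, sub_eq_zero]

lemma IsIndep.notMem_nbr (hA : IsIndep G A) {v : V} (hv : v ∈ A) : v ∉ nbr G A := fun h =>
  let ⟨w, hw, hvw⟩ := mem_nbr.1 h
  hA v hv w hw hvw

lemma IsIndep.nbrNormal_add_eq_zero_iff (hA : IsIndep G A) {i j : V} (hij : G.Adj i j) :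
    nbrNormal G A i + nbrNormal G A j = 0 ↔
      (i ∈ nbr G A → j ∈ A) ∧ (j ∈ nbr G A → i ∈ A) := by
  by_cases hi : i ∈ A
  · have hjN : j ∈ nbr G A := mem_nbr.2 ⟨i, hi, hij.symm⟩
    have hj : j ∉ A := fun hj => hA i hi j hj hij
    simp [nbrNormal, hi, hj, hjN, hA.notMem_nbr hi]
  by_cases hj : j ∈ A
  · have hiN : i ∈ nbr G A := mem_nbr.2 ⟨j, hj, hij⟩
    simp [nbrNormal, hi, hj, hiN, hA.notMem_nbr hj]
  by_cases hiN : i ∈ nbr G A <;> by_cases hjN : j ∈ nbr G A <;>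
    norm_num [nbrNormal, hi, hj, hiN, hjN]

lemma le_neg_of_mem_nbr_superlevel (ha : ∀ i j, G.Adj i j → a i + a j ≤ 0) {v : V}
    (hv : v ∈ nbr G {v | t ≤ a v}) : a v ≤ -t := by
  obtain ⟨w, hw, hvw⟩ := mem_nbr.1 hv
  rw [mem_filter_univ] at hw
  linarith [ha v w hvw]

lemma nbrNormal_superlevel_add_eq_zero (ha : ∀ i j, G.Adj i j → a i + a j ≤ 0) (ht : 0 < t)
    {i j : V} (hij : G.Adj i j) (h : a i + a j = 0) :
    nbrNormal G {v | t ≤ a v} i + nbrNormal G {v | t ≤ a v} j = 0 := by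
  rw [(isIndep_superlevel ha ht).nbrNormal_add_eq_zero_iff hij]
  constructor <;> intro hN <;> rw [mem_filter_univ] <;>
    linarith [le_neg_of_mem_nbr_superlevel ha hN]

theorem edgeCone_inter_eq_superlevel (ha : ∀ i j, G.Adj i j → a i + a j ≤ 0)
    (hdim : Module.finrank ℝ (Submodule.span ℝ (edgeCone G)) ≤
      Module.finrank ℝ (Submodule.span ℝ (edgeCone G ∩ {x | x ⬝ᵥ a = 0})) + 1)
    {i j k : V} (hi : a i < 0) (hij : G.Adj i j) (hlt : a i + a j < 0)
    (hik : G.Adj i k) (hk : a i + a k = 0) :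
    edgeCone G ∩ {x | x ⬝ᵥ a = 0} =
      edgeCone G ∩ {x | ∑ v with -a i ≤ a v, x v = ∑ v ∈ nbr G {v | -a i ≤ a v}, x v} := by
  have ht : 0 < -a i := neg_pos.2 hi
  have hiN : i ∈ nbr G {v | -a i ≤ a v} := mem_nbr.2 ⟨k, (mem_filter_univ k).2 (by linarith), hik⟩
  have hne : nbrNormal G {v | -a i ≤ a v} i + nbrNormal G {v | -a i ≤ a v} j ≠ 0 := by
    rw [Ne, (isIndep_superlevel ha ht).nbrNormal_add_eq_zero_iff hij]
    intro h
    have := (mem_filter_univ j).1 (h.1 hiN)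
    linarith
  simpa only [dotProduct_nbrNormal_eq_zero_iff] using edgeCone_inter_eq_of_tight ha hdim
    (fun _ _ => nbrNormal_superlevel_add_eq_zero ha ht) hij hne

end Independent

theorem stmt5_general {V : Type*} [Fintype V] [DecidableEq V] (G : SimpleGraph V)
    [DecidableRel G.Adj] (F : Set (V → ℝ)) (hF : IsFacet (edgeCone G) F) :
    (∃ i : V, F = edgeCone G ∩ {x : V → ℝ | x i = 0}) ∨
    (∃ A : Finset V, IsIndep G A ∧
      F = edgeCone G ∩ {x : V → ℝ | ∑ i ∈ A, x i = ∑ i ∈ nbr G A, x i}) := by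
  obtain ⟨⟨a, hQ, rfl⟩, hfinrank⟩ := hF
  have hdim := Nat.sub_le_iff_le_add.1 hfinrank.ge
  have ha : ∀ i j, G.Adj i j → a i + a j ≤ 0 := fun i j hij =>
    (edgeVector_dotProduct i j a).symm.trans_le (hQ _ (edgeVector_mem_edgeCone hij))
  by_cases htight : ∀ i j, G.Adj i j → a i + a j = 0
  · -- `IsFacet` subtracts in `ℕ`, so the zero cone is a facet of itself; `H_∅` is the whole space.
    refine .inr ⟨∅, by simp [IsIndep], ?_⟩
    have hall : edgeCone G ⊆ {x | x ⬝ᵥ a = 0} := fun x => dotProduct_eq_zero_of_forall_adj htight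
    exact (Set.inter_eq_left.2 hall).trans (by simp [nbr])
  obtain ⟨i, j, hij, hlt, hi⟩ := exists_adj_add_neg_of_not_tight ha htight
  by_cases hk : ∃ k, G.Adj i k ∧ a i + a k = 0
  · obtain ⟨k, hik, hk⟩ := hk
    exact .inr ⟨_, isIndep_superlevel ha (neg_pos.2 hi),
      edgeCone_inter_eq_superlevel ha hdim hi hij hlt hik hk⟩
  · push Not at hk
    exact .inl ⟨i, edgeCone_inter_eq_coordinate ha hdim hij hk⟩

/-- Every facet `F` of the edge cone of `G` is either of the form
`ℝ₊𝒜 ∩ {x | x i = 0}` for some vertex `v_i`, or `ℝ₊𝒜 ∩ H_A` for some independent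
set of vertices `A`. -/
theorem stmt5 {n : ℕ} (G : SimpleGraph (Fin n)) [DecidableRel G.Adj]
    (F : Set (Fin n → ℝ)) (hF : IsFacet (edgeCone G) F) :
    (∃ i : Fin n, F = edgeCone G ∩ {x : Fin n → ℝ | x i = 0}) ∨
    (∃ A : Finset (Fin n), IsIndep G A ∧
      F = edgeCone G ∩ {x : Fin n → ℝ | ∑ i ∈ A, x i = ∑ i ∈ nbr G A, x i}) :=
  stmt5_general G F hF
end

section
/- Let G be a bipartite finite simple graph on vertex set V = {v_1,...,v_n}. Then Z^n ∩ R+A = NA; that is, an integer vector α ∈ Z^n lies in the edge cone of G if and only if α is a linear combination with nonnegative integer coefficients of the edge vectors of G. -/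
open Finset

/-! A nonnegative real matrix with integral row and column sums can be replaced by a natural matrix
with the same margins and no larger support: split each row and column into as many copies as its
sum; double counting the weight gives Hall's condition between the copies, and counting matched
pairs gives the integral matrix. In a bipartite graph with part `U`, turning every edge so that it
starts in `U` makes the two margins at a vertex equal to its coordinate and `0`, so an integral
point of the cone has integral margins. -/

section Transportation

theorem card_filter_sigma_fst_mem {ι : Type*} [Fintype ι] [DecidableEq ι] (κ : ι → Type*)
    [∀ i, Fintype (κ i)] (A : Finset ι) :
    #{p : Σ i, κ i | p.1 ∈ A} = ∑ i ∈ A, Fintype.card (κ i) := by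
  have : ({p : Σ i, κ i | p.1 ∈ A} : Finset _) = A.sigma fun _ => univ := by ext; simp
  rw [this, card_sigma]
  simp only [card_univ]

theorem sum_card_filter_and_eq {γ κ : Type*} [Fintype γ] [Fintype κ] [DecidableEq κ] (p : γ → Prop)
    [DecidablePred p] (g : γ → κ) : ∑ j, #{x | p x ∧ g x = j} = #{x | p x} := by
  simpa only [filter_filter] using
    (card_eq_sum_card_fiberwise (s := {x | p x}) (t := univ) (f := g) fun _ _ => by simp).symm

variable {α β R : Type*} [Fintype α] [Fintype β] [PartialOrder R]

theorem sum_row_sums_le_sum_col_sums [AddCommMonoid R] [IsOrderedAddMonoid R] {d : α → β → R}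
    (hd : ∀ i j, 0 ≤ d i j) {S : Finset α} {T : Finset β}
    (hST : ∀ i ∈ S, ∀ j, d i j ≠ 0 → j ∈ T) :
    ∑ i ∈ S, ∑ j, d i j ≤ ∑ j ∈ T, ∑ i, d i j :=
  calc ∑ i ∈ S, ∑ j, d i j = ∑ i ∈ S, ∑ j ∈ T, d i j :=
        sum_congr rfl fun i hi => (sum_subset (subset_univ T) fun j _ hj =>
          not_not.1 fun hij => hj (hST i hi j hij)).symm
    _ = ∑ j ∈ T, ∑ i ∈ S, d i j := sum_comm
    _ ≤ ∑ j ∈ T, ∑ i, d i j := sum_le_sum fun j _ =>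
        sum_le_sum_of_subset_of_nonneg (subset_univ S) fun i _ _ => hd i j

variable [AddCommMonoidWithOne R] [IsOrderedAddMonoid R] [ZeroLEOneClass R] [CharZero R]
  {d : α → β → R} {a : α → ℕ} {b : β → ℕ}

theorem card_le_card_sigma_neighbors (hd : ∀ i j, 0 ≤ d i j) (hrow : ∀ i, ∑ j, d i j = a i)
    (hcol : ∀ j, ∑ i, d i j = b j) (s : Finset (Σ i, Fin (a i)))
    [DecidablePred fun q : Σ j, Fin (b j) => ∃ p ∈ s, d p.1 q.1 ≠ 0] :
    #s ≤ #{q : Σ j, Fin (b j) | ∃ p ∈ s, d p.1 q.1 ≠ 0} := by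
  classical
  let S : Finset α := s.image Sigma.fst
  let T : Finset β := {j | ∃ p ∈ s, d p.1 j ≠ 0}
  have weight_le : ∑ i ∈ S, a i ≤ ∑ j ∈ T, b j := by
    have h : ∑ i ∈ S, ∑ j, d i j ≤ ∑ j ∈ T, ∑ i, d i j := by
      refine sum_row_sums_le_sum_col_sums hd fun i hi j hij => ?_
      obtain ⟨p, hp, rfl⟩ := mem_image.1 hi
      exact mem_filter.2 ⟨mem_univ j, p, hp, hij⟩
    simp only [hrow, hcol] at h
    exact_mod_cast h
  calc #s ≤ #{p : Σ i, Fin (a i) | p.1 ∈ S} :=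
        card_le_card fun p hp => mem_filter.2 ⟨mem_univ p, mem_image_of_mem _ hp⟩
    _ = ∑ i ∈ S, a i := by simp only [card_filter_sigma_fst_mem, Fintype.card_fin]
    _ ≤ ∑ j ∈ T, b j := weight_le
    _ = #{q : Σ j, Fin (b j) | q.1 ∈ T} := by
        simp only [card_filter_sigma_fst_mem, Fintype.card_fin]
    _ = #{q : Σ j, Fin (b j) | ∃ p ∈ s, d p.1 q.1 ≠ 0} := by
        simp only [T, mem_filter, mem_univ, true_and]

theorem exists_sigma_equiv_of_sum_eq_natCast (hd : ∀ i j, 0 ≤ d i j)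
    (hrow : ∀ i, ∑ j, d i j = a i) (hcol : ∀ j, ∑ i, d i j = b j) :
    ∃ e : (Σ i, Fin (a i)) ≃ Σ j, Fin (b j), ∀ p, d p.1 (e p).1 ≠ 0 := by
  classical
  obtain ⟨f, hf, hfd⟩ := (Fintype.all_card_le_filter_rel_iff_exists_injective
    fun (p : Σ i, Fin (a i)) (q : Σ j, Fin (b j)) => d p.1 q.1 ≠ 0).1
    fun s => card_le_card_sigma_neighbors hd hrow hcol s
  have total : ∑ i, a i = ∑ j, b j := by
    have h : ∑ i, ∑ j, d i j = ∑ j, ∑ i, d i j := sum_comm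
    simp only [hrow, hcol] at h
    exact_mod_cast h
  have card_eq : Fintype.card (Σ i, Fin (a i)) = Fintype.card (Σ j, Fin (b j)) := by
    simpa only [Fintype.card_sigma, Fintype.card_fin] using total
  exact ⟨.ofBijective f ((Fintype.bijective_iff_injective_and_card f).2 ⟨hf, card_eq⟩), hfd⟩

theorem exists_nat_matrix_of_sum_eq_natCast (hd : ∀ i j, 0 ≤ d i j)
    (hrow : ∀ i, ∑ j, d i j = a i) (hcol : ∀ j, ∑ i, d i j = b j) :
    ∃ c : α → β → ℕ, (∀ i j, d i j = 0 → c i j = 0) ∧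
      (∀ i, ∑ j, c i j = a i) ∧ ∀ j, ∑ i, c i j = b j := by
  classical
  obtain ⟨e, he⟩ := exists_sigma_equiv_of_sum_eq_natCast hd hrow hcol
  refine ⟨fun i j => #{p : Σ i, Fin (a i) | p.1 = i ∧ (e p).1 = j}, fun i j hij => ?_,
    fun i => ?_, fun j => ?_⟩
  · rw [card_eq_zero, filter_eq_empty_iff]
    rintro p - ⟨rfl, rfl⟩
    exact he p hij
  · calc ∑ j, #{p : Σ i, Fin (a i) | p.1 = i ∧ (e p).1 = j}
        = #{p : Σ i, Fin (a i) | p.1 = i} := sum_card_filter_and_eq _ _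
      _ = a i := by simpa using card_filter_sigma_fst_mem (fun i => Fin (a i)) {i}
  · calc ∑ i, #{p : Σ i, Fin (a i) | p.1 = i ∧ (e p).1 = j}
        = #{p : Σ i, Fin (a i) | (e p).1 = j} := by
          simpa only [and_comm] using
            sum_card_filter_and_eq (fun p : Σ i, Fin (a i) => (e p).1 = j) Sigma.fst
      _ = #{q : Σ j, Fin (b j) | q.1 = j} := card_equiv e fun p => by simp
      _ = b j := by simpa using card_filter_sigma_fst_mem (fun j => Fin (b j)) {j}

end Transportation

/-- The total weight at the vertex `k` of a weighting `c` of ordered pairs, both orientations of a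
pair counting equally; it is the `k`-th coordinate of the combination of edge vectors with
coefficients `c`. -/
def weightedDegree {V M : Type*} [Fintype V] [AddCommMonoid M] (c : V → V → M) (k : V) : M :=
  ∑ j, (c k j + c j k)

section WeightedDegree

variable {V M : Type*} [Fintype V]

theorem sum_smul_edgeVector [DecidableEq V] (c : V → V → ℝ) :
    ∑ i, ∑ j, c i j • edgeVector i j = weightedDegree c := by
  funext k
  simp [edgeVector, weightedDegree, Finset.sum_apply, mul_add, sum_add_distrib]

theorem natCast_weightedDegree [AddCommMonoidWithOne M] (c : V → V → ℕ) (k : V) :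
    ((weightedDegree c k : ℕ) : M) = weightedDegree (fun i j => (c i j : M)) k := by
  simp only [weightedDegree, Nat.cast_sum, Nat.cast_add]

theorem weightedDegree_nonneg [AddCommMonoid M] [PartialOrder M] [IsOrderedAddMonoid M]
    {c : V → V → M} (hc : ∀ i j, 0 ≤ c i j) (k : V) : 0 ≤ weightedDegree c k :=
  sum_nonneg fun j _ => add_nonneg (hc k j) (hc j k)

end WeightedDegree

/-- The weighting obtained from `c` by moving the whole weight of each pair to its orientation
starting in `U`. It is meant for weightings of pairs with exactly one element in `U`; the weight
of other pairs is not preserved. -/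
def orientFrom {V M : Type*} [Add M] [Zero M] (U : Set V) [DecidablePred (· ∈ U)]
    (c : V → V → M) (i j : V) : M :=
  if i ∈ U then c i j + c j i else 0

section Orientation

variable {V M : Type*} [AddCommMonoid M] {U : Set V} [DecidablePred (· ∈ U)] {c : V → V → M}

theorem orientFrom_eq_ite_right (hc : ∀ i j, c i j ≠ 0 → (i ∈ U ↔ j ∉ U)) (i j : V) :
    orientFrom U c i j = if j ∈ U then 0 else c j i + c i j := by
  by_cases hU : i ∈ U ↔ j ∉ U
  · by_cases hj : j ∈ U <;> simp_all [orientFrom, add_comm]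
  · have hij : c i j = 0 := not_not.1 fun h => hU (hc i j h)
    have hji : c j i = 0 := not_not.1 fun h => hU (iff_not_comm.1 (hc j i h))
    simp [orientFrom, hij, hji]

variable [Fintype V]

theorem sum_orientFrom_right (c : V → V → M) (k : V) :
    ∑ j, orientFrom U c k j = if k ∈ U then weightedDegree c k else 0 := by
  by_cases hk : k ∈ U <;> simp [orientFrom, weightedDegree, hk]

theorem sum_orientFrom_left (hc : ∀ i j, c i j ≠ 0 → (i ∈ U ↔ j ∉ U)) (k : V) :
    ∑ i, orientFrom U c i k = if k ∈ U then 0 else weightedDegree c k := by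
  simp only [orientFrom_eq_ite_right hc]
  by_cases hk : k ∈ U <;> simp [weightedDegree, hk]

end Orientation

theorem exists_nat_weightedDegree_eq {V M : Type*} [Fintype V] [AddCommMonoidWithOne M]
    [PartialOrder M] [IsOrderedAddMonoid M] [ZeroLEOneClass M] [CharZero M] {U : Set V}
    {c : V → V → M} {m : V → ℕ}
    (hc_nonneg : ∀ i j, 0 ≤ c i j) (hc : ∀ i j, c i j ≠ 0 → (i ∈ U ↔ j ∉ U))
    (hm : ∀ k, weightedDegree c k = m k) :
    ∃ w : V → V → ℕ, (∀ i j, c i j = 0 → c j i = 0 → w i j = 0) ∧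
      ∀ k, weightedDegree w k = m k := by
  classical
  have nonneg (i j : V) : 0 ≤ orientFrom U c i j := by
    unfold orientFrom
    split_ifs
    exacts [add_nonneg (hc_nonneg i j) (hc_nonneg j i), le_rfl]
  obtain ⟨w, hw, hrow, hcol⟩ := exists_nat_matrix_of_sum_eq_natCast nonneg
    (a := fun k => if k ∈ U then m k else 0) (b := fun k => if k ∈ U then 0 else m k)
    (fun k => by simp [sum_orientFrom_right, hm]) (fun k => by simp [sum_orientFrom_left hc, hm])
  refine ⟨w, fun i j hij hji => hw i j (by simp [orientFrom, hij, hji]), fun k => ?_⟩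
  rw [weightedDegree, sum_add_distrib, hrow, hcol]
  by_cases hk : k ∈ U <;> simp [hk]

theorem exists_natCast_eq_of_exists_intCast_eq {R : Type*} [AddCommGroupWithOne R]
    [PartialOrder R] [IsOrderedAddMonoid R] [ZeroLEOneClass R] [NeZero (1 : R)] {x : R}
    (hx : 0 ≤ x) (hz : ∃ z : ℤ, x = z) :
    ∃ m : ℕ, x = m := by
  obtain ⟨z, rfl⟩ := hz
  lift z to ℕ using Int.cast_nonneg_iff.1 hx
  exact ⟨z, Int.cast_natCast z⟩

theorem stmt15_general {V : Type*} [Fintype V] [DecidableEq V] (G : SimpleGraph V)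
    (hbip : ∃ U : Set V, ∀ i j, G.Adj i j → (i ∈ U ↔ j ∉ U)) (x : V → ℝ) :
    (x ∈ edgeCone G ∧ ∀ i, ∃ z : ℤ, x i = (z : ℝ)) ↔
    ∃ c : V → V → ℕ, (∀ i j, ¬ G.Adj i j → c i j = 0) ∧
      x = ∑ i, ∑ j, (c i j : ℝ) • edgeVector i j := by
  constructor
  · rintro ⟨⟨c, hc_nonneg, hc, rfl⟩, hint⟩
    simp only [sum_smul_edgeVector] at hint ⊢
    obtain ⟨U, hU⟩ := hbip
    choose m hm using fun k => exists_natCast_eq_of_exists_intCast_eq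
      (weightedDegree_nonneg hc_nonneg k) (hint k)
    obtain ⟨w, hw, hwm⟩ := exists_nat_weightedDegree_eq hc_nonneg
      (fun i j hij => hU i j (not_imp_comm.1 (hc i j) hij)) hm
    refine ⟨w, fun i j hij => hw i j (hc i j hij) (hc j i fun hji => hij hji.symm),
      funext fun k => ?_⟩
    rw [← natCast_weightedDegree, hwm, hm]
  · rintro ⟨c, hc, rfl⟩
    refine ⟨⟨fun i j => c i j, fun i j => Nat.cast_nonneg _, fun i j hij => ?_, rfl⟩, fun k => ?_⟩
    · simp only [hc i j hij, Nat.cast_zero]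
    · refine ⟨(weightedDegree c k : ℕ), ?_⟩
      rw [sum_smul_edgeVector, ← natCast_weightedDegree, Int.cast_natCast]

/-- For a bipartite graph `G`, `ℤⁿ ∩ ℝ₊𝒜 = ℕ𝒜`: an integer vector lies in the edge
cone if and only if it is a nonnegative integer combination of the edge vectors. -/
theorem stmt15 {n : ℕ} (G : SimpleGraph (Fin n))
    (hbip : ∃ U : Set (Fin n), ∀ i j, G.Adj i j → (i ∈ U ↔ j ∉ U))
    (x : Fin n → ℝ) :
    (x ∈ edgeCone G ∧ ∀ i, ∃ z : ℤ, x i = (z : ℝ)) ↔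
    ∃ c : Fin n → Fin n → ℕ, (∀ i j, ¬ G.Adj i j → c i j = 0) ∧
      x = ∑ i, ∑ j, (c i j : ℝ) • edgeVector i j :=
  stmt15_general G hbip x
end
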